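/- Let a ≥ 0, let f : [a, ∞) → ℝ be increasing and concave, and let r, r′ ≥ 0. Then sup_{S ≥ 0} | f(a + r + S) − f(a + r′ + S) | = | f(a + r) − f(a + r′) |. -/

import Mathlib

/-! A concave function has nonincreasing increments: moving an interval `[x, y]` to the right
by `S` can only decrease `f y - f x`. For increasing `f` the increments are nonnegative, so the
same holds for their absolute values. Hence `S = 0` is the maximizer and bounds the family. -/

open Real

/-- Increments of a concave function over intervals of fixed length are nonincreasing. -/
lemma concave_increment_shift_le {a x y S : ℝ} {f : ℝ → ℝ} (hconc : ConcaveOn ℝ (Set.Ici a) f)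
    (hx : a ≤ x) (hxy : x ≤ y) (hS : 0 ≤ S) : f (y + S) - f (x + S) ≤ f y - f x := by
  rcases hxy.eq_or_lt with rfl | hlt
  · simp
  have hd : 0 < y - x + S := by linarith
  have hu : 0 ≤ (y - x) / (y - x + S) := div_nonneg (by linarith) hd.le
  have hv : 0 ≤ S / (y - x + S) := div_nonneg hS hd.le
  have huv : (y - x) / (y - x + S) + S / (y - x + S) = 1 := by field_simp
  have hxm : x ∈ Set.Ici a := hx
  have hym : y + S ∈ Set.Ici a := by
    simp only [Set.mem_Ici]
    linarith
  -- `x + S` and `y` are convex combinations of `x` and `y + S` with swapped weights.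
  have h1 := hconc.2 hxm hym hu hv huv
  have h2 := hconc.2 hxm hym hv hu (by rw [add_comm]; exact huv)
  simp only [smul_eq_mul] at h1 h2
  have e1 : (y - x) / (y - x + S) * x + S / (y - x + S) * (y + S) = x + S := by
    field_simp
    ring
  have e2 : S / (y - x + S) * x + (y - x) / (y - x + S) * (y + S) = y := by
    field_simp
    ring
  rw [e1] at h1
  rw [e2] at h2
  linear_combination h1 + h2 - (f x + f (y + S)) * huv

/-- For increasing concave `f`, the absolute increment is nonincreasing under right shifts. -/
lemma abs_increment_shift_le {a x y S : ℝ} {f : ℝ → ℝ} (hmono : MonotoneOn f (Set.Ici a))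
    (hconc : ConcaveOn ℝ (Set.Ici a) f) (hx : a ≤ x) (hy : a ≤ y) (hS : 0 ≤ S) :
    |f (x + S) - f (y + S)| ≤ |f x - f y| := by
  wlog hxy : x ≤ y generalizing x y
  · rw [abs_sub_comm, abs_sub_comm (f x)]
    exact this hy hx (le_of_not_ge hxy)
  have hshift : f (x + S) ≤ f (y + S) :=
    hmono (Set.mem_Ici.2 (by linarith)) (Set.mem_Ici.2 (by linarith)) (by linarith)
  rw [abs_sub_comm, abs_sub_comm (f x), abs_of_nonneg (sub_nonneg.2 hshift)]
  exact (concave_increment_shift_le hconc hx hxy hS).trans (le_abs_self _)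

/-- Bounded per-record sensitivity of the transformed global sum query: for `f`
increasing and concave on `[a,∞)`, the supremum over the sum `S ≥ 0` of the remaining
records of `|f(a + r + S) − f(a + r′ + S)|` is attained at `S = 0`. -/
theorem stmt14 (a r r' : ℝ) (ha : 0 ≤ a) (hr : 0 ≤ r) (hr' : 0 ≤ r')
    (f : ℝ → ℝ) (hmono : MonotoneOn f (Set.Ici a))
    (hconc : ConcaveOn ℝ (Set.Ici a) f) :
    (⨆ S : {S : ℝ // 0 ≤ S}, |f (a + r + S) - f (a + r' + S)|) =
      |f (a + r) - f (a + r')| := by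
  have key : ∀ S : {S : ℝ // 0 ≤ S},
      |f (a + r + S) - f (a + r' + S)| ≤ |f (a + r) - f (a + r')| := fun S =>
    abs_increment_shift_le hmono hconc (by linarith) (by linarith) S.2
  have : Nonempty {S : ℝ // 0 ≤ S} := ⟨⟨0, le_rfl⟩⟩
  refine le_antisymm (ciSup_le key) ?_
  have hbdd : BddAbove (Set.range fun S : {S : ℝ // 0 ≤ S} =>
      |f (a + r + S) - f (a + r' + S)|) := ⟨_, Set.forall_mem_range.2 key⟩
  simpa using le_ciSup hbdd ⟨0, le_rfl⟩
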